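/- Let a, b, c be real numbers with c > 1, and suppose D₃ ≥ 0 (so that P(x) = x³ + a x² + b x + c has three real roots counted with multiplicity). Then P has exactly 2 roots, counted with multiplicity, in the closed interval [−1, 1] if and only if (A ≤ 0 and B ≤ 0) or (A ≥ 0 and B ≥ 0 and E ≥ 0). -/

import Mathlib

open Polynomial

lemma aux_fwd (x y z : ℝ) (h : x*y*z < -1) (hx1 : -1 ≤ x) (hx2 : x ≤ 1) (hy1 : -1 ≤ y) (hy2 : y ≤ 1) :
    ((1-x)*(1-y)*(1-z) ≤ 0 ∧ -((1+x)*(1+y)*(1+z)) ≤ 0) ∨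
    ((1-x)*(1-y)*(1-z) ≥ 0 ∧ -((1+x)*(1+y)*(1+z)) ≥ 0 ∧ (1-x*y)*(1-y*z)*(1-z*x) ≥ 0) := by
  have h1 : 0 ≤ (1-x)*(1-y) := mul_nonneg (by linarith) (by linarith)
  have h2 : 0 ≤ (1+x)*(1+y) := mul_nonneg (by linarith) (by linarith)
  have hxy1 : x*y ≤ 1 := by nlinarith
  have hxy2 : -1 ≤ x*y := by nlinarith
  rcases le_or_gt z 0 with hz | hz
  · right
    have hz1 : z < -1 := by
      by_contra hcon
      nlinarith
    have hxy : 0 < x*y := by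
      by_contra hcon
      nlinarith
    refine ⟨mul_nonneg h1 (by linarith), ?_, ?_⟩
    · nlinarith
    · rw [mul_assoc]
      refine mul_nonneg (by linarith) ?_
      rcases pos_and_pos_or_neg_and_neg_of_mul_pos hxy with ⟨a, b⟩ | ⟨a, b⟩
      · exact mul_nonneg (by nlinarith) (by nlinarith)
      · have := mul_pos_of_neg_of_neg b (by linarith : z < 0)
        have := mul_pos_of_neg_of_neg (by linarith : z < 0) a
        exact mul_nonneg_of_nonpos_of_nonpos (by nlinarith) (by nlinarith)
  · left
    have hz1 : 1 < z := by
      by_contra hcon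
      nlinarith
    constructor
    · exact mul_nonpos_of_nonneg_of_nonpos h1 (by linarith)
    · have := mul_nonneg h2 (by linarith : 0 ≤ 1 + z)
      linarith

def In1 (t : ℝ) : Prop := -1 ≤ t ∧ t ≤ 1

def Cond (x y z : ℝ) : Prop := ((1-x)*(1-y)*(1-z) ≤ 0 ∧ -((1+x)*(1+y)*(1+z)) ≤ 0) ∨
    ((1-x)*(1-y)*(1-z) ≥ 0 ∧ -((1+x)*(1+y)*(1+z)) ≥ 0 ∧ (1-x*y)*(1-y*z)*(1-z*x) ≥ 0)

def Two (x y z : ℝ) : Prop := (In1 x ∧ In1 y) ∨ (In1 x ∧ In1 z) ∨ (In1 y ∧ In1 z)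

lemma cond_perm1 (x y z : ℝ) : Cond x y z ↔ Cond y x z := by
  unfold Cond
  ring_nf
lemma cond_perm2 (x y z : ℝ) : Cond x y z ↔ Cond x z y := by
  unfold Cond
  ring_nf
lemma two_perm1 (x y z : ℝ) : Two x y z ↔ Two y x z := by
  unfold Two; tauto
lemma two_perm2 (x y z : ℝ) : Two x y z ↔ Two x z y := by
  unfold Two; tauto

/-- sorted backward direction -/
lemma aux_bwd (x y z : ℝ) (h : x*y*z < -1) (hxy : x ≤ y) (hyz : y ≤ z) (hC : Cond x y z) :
    Two x y z := by
  have hx : x < 0 := by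
    by_contra hcon
    have := mul_nonneg (mul_nonneg (by linarith : 0 ≤ x) (by linarith : 0 ≤ y)) (by linarith : 0 ≤ z)
    linarith
  have hyz0 : 0 < y*z := by
    by_contra hcon
    nlinarith
  unfold Two In1
  rcases pos_and_pos_or_neg_and_neg_of_mul_pos hyz0 with ⟨hy, hz⟩ | ⟨hy, hz⟩
  · rcases hC with ⟨hA, hB⟩ | ⟨hA, hB, hE⟩
    · left
      have hx1 : -1 ≤ x := by
        by_contra hcon
        have := mul_pos (mul_pos (by linarith : 0 < -(1+x)) (by linarith : 0 < 1 + y)) (by linarith : 0 < 1+z)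
        linarith
      have hy1 : y ≤ 1 := by
        by_contra hcon
        have := mul_pos (mul_pos (by linarith : 0 < (1-x)) (by linarith : 0 < -(1 - y))) (by linarith : 0 < -(1-z))
        linarith
      exact ⟨⟨hx1, by linarith⟩, by linarith, hy1⟩
    · right; right
      have h1 : 0 < 1 - x*y := by nlinarith
      have h2 : 0 < 1 - z*x := by nlinarith
      have h3 : y*z ≤ 1 := by
        by_contra hcon
        have := mul_pos (mul_pos h1 (by linarith : 0 < -(1 - y*z))) h2
        linarith
      have hy1 : y ≤ 1 := by nlinarith
      have hz1 : z ≤ 1 := by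
        by_contra hcon
        have hy2 : y < 1 := by nlinarith
        have := mul_pos (mul_pos (by linarith : 0 < (1-x)) (by linarith : 0 < (1 - y))) (by linarith : 0 < -(1-z))
        linarith
      exact ⟨⟨by linarith, hy1⟩, by linarith, hz1⟩
  · right; right
    have hA' := mul_pos (mul_pos (by linarith : 0 < (1-x)) (by linarith : 0 < (1 - y))) (by linarith : 0 < (1-z))
    rcases hC with ⟨hA, hB⟩ | ⟨hA, hB, hE⟩
    · linarith
    suffices hh : -1 ≤ y from ⟨⟨hh, by linarith⟩, by linarith, by linarith⟩
    by_contra hcon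
    have hxy1 : 1 < x*y := by nlinarith
    have hz1 : z ≤ -1 := by
      by_contra hcon
      have := mul_pos (mul_pos (by linarith : 0 < -(1+x)) (by linarith : 0 < -(1 + y))) (by linarith : 0 < (1+z))
      linarith
    have h2 : 1 < y*z := by nlinarith
    have h3 : 1 < z*x := by nlinarith
    have := mul_pos (mul_pos (by linarith : 0 < -(1-x*y)) (by linarith : 0 < -(1 - y*z))) (by linarith : 0 < -(1-z*x))
    linarith

lemma aux_bwd' (x y z : ℝ) (h : x*y*z < -1) (hC : Cond x y z) : Two x y z := by
  rcases le_total x y with h1 | h1 <;> rcases le_total y z with h2 | h2 <;>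
    rcases le_total x z with h3 | h3
  · exact aux_bwd x y z h h1 h2 hC
  · exact aux_bwd x y z h h1 h2 hC
  · rw [two_perm2]; rw [cond_perm2] at hC
    exact aux_bwd x z y (by linarith) h3 h2 hC
  · rw [two_perm2, two_perm1]; rw [cond_perm2, cond_perm1] at hC
    exact aux_bwd z x y (by linarith) h3 h1 hC
  · rw [two_perm1]; rw [cond_perm1] at hC
    exact aux_bwd y x z (by linarith) h1 h3 hC
  · rw [two_perm1, two_perm2]; rw [cond_perm1, cond_perm2] at hC
    exact aux_bwd y z x (by linarith) h2 h3 hC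
  · rw [two_perm1, two_perm2, two_perm1]; rw [cond_perm1, cond_perm2, cond_perm1] at hC
    exact aux_bwd z y x (by linarith) h2 h1 hC
  · rw [two_perm1, two_perm2, two_perm1]; rw [cond_perm1, cond_perm2, cond_perm1] at hC
    exact aux_bwd z y x (by linarith) h2 h1 hC

lemma two_iff (x y z : ℝ) (h : x*y*z < -1) : Two x y z ↔ Cond x y z := by
  refine ⟨?_, aux_bwd' x y z h⟩
  rintro (⟨⟨a, b⟩, c, d⟩ | ⟨⟨a, b⟩, c, d⟩ | ⟨⟨a, b⟩, c, d⟩)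
  · exact aux_fwd x y z h a b c d
  · rw [cond_perm2]
    exact aux_fwd x z y (by linarith) a b c d
  · rw [cond_perm1, cond_perm2]
    exact aux_fwd y z x (by linarith) a b c d

lemma not_three (x y z : ℝ) (h : x*y*z < -1) : ¬ (In1 x ∧ In1 y ∧ In1 z) := by
  rintro ⟨hx, hy, hz⟩
  have h1 : |x| ≤ 1 := abs_le.2 hx
  have h2 : |y| ≤ 1 := abs_le.2 hy
  have h3 : |z| ≤ 1 := abs_le.2 hz
  have h4 : |x*y*z| ≤ 1 := by
    rw [abs_mul, abs_mul]
    exact mul_le_one₀ (mul_le_one₀ h1 (abs_nonneg _) h2) (abs_nonneg _) h3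
  have := (abs_le.1 h4).1
  linarith

lemma exists_root (a b c : ℝ) : ∃ x : ℝ, x^3 + a*x^2 + b*x + c = 0 := by
  set M := 1 + |a| + |b| + |c| with hM
  have ha := abs_nonneg a
  have hb := abs_nonneg b
  have hc := abs_nonneg c
  have hM1 : 1 ≤ M := by linarith
  have hM2 : M ≤ M^2 := by nlinarith
  have e : M^3 = M^2 + |a| * M^2 + |b| * M^2 + |c| * M^2 := by
    calc M^3 = M * M^2 := by ring
      _ = (1 + |a| + |b| + |c|) * M^2 := by rw [← hM]
      _ = _ := by ring
  have t1 : |a*M^2| ≤ |a| * M^2 := by rw [abs_mul, abs_of_nonneg (sq_nonneg M)]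
  have t2 : |b*M| ≤ |b| * M^2 := by
    rw [abs_mul, abs_of_nonneg (by linarith : 0 ≤ M)]; exact mul_le_mul_of_nonneg_left hM2 hb
  have t3 : |c| ≤ |c| * M^2 := by nlinarith
  have t1' := abs_le.1 t1
  have t2' := abs_le.1 t2
  have t3' := abs_le.1 t3
  have hcont : ContinuousOn (fun x : ℝ => x^3 + a*x^2 + b*x + c) (Set.Icc (-M) M) := by fun_prop
  have := intermediate_value_Icc (by linarith : -M ≤ M) hcont
  obtain ⟨x, -, hx⟩ := this (show (0:ℝ) ∈ _ from ⟨by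
    show (-M)^3 + a*(-M)^2 + b*(-M) + c ≤ 0
    have : (-M)^3 + a*(-M)^2 + b*(-M) + c = -M^3 + a*M^2 - b*M + c := by ring
    rw [this]; linarith [sq_nonneg M], by
    show 0 ≤ M^3 + a*M^2 + b*M + c
    linarith [sq_nonneg M]⟩)
  exact ⟨x, hx⟩

lemma exists_three (a b c : ℝ)
    (hD : -27*c^2 + (18*a*b - 4*a^3)*c + a^2*b^2 - 4*b^3 ≥ 0) :
    ∃ x y z : ℝ, a = -(x+y+z) ∧ b = x*y+y*z+z*x ∧ c = -(x*y*z) := by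
  obtain ⟨x, hx⟩ := exists_root a b c
  have hc : c = -(x^3 + a*x^2 + b*x) := by linarith
  set q := (a+x)^2 - 4*(b + a*x + x^2) with hq
  have hfac : -27*c^2 + (18*a*b - 4*a^3)*c + a^2*b^2 - 4*b^3 = q * (3*x^2+2*a*x+b)^2 := by
    rw [hc, hq]; ring
  have hq0 : 0 ≤ q := by
    by_contra hcon
    push Not at hcon
    rw [hfac] at hD
    have : (0:ℝ) < 3*x^2+2*a*x+b := by nlinarith [sq_nonneg (3*x + a)]
    nlinarith [pow_pos this 2]
  have hs := Real.mul_self_sqrt hq0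
  set s := √q
  refine ⟨x, (-(a+x)+s)/2, (-(a+x)-s)/2, by ring, by linarith, ?_⟩
  have : (-(a+x)+s)/2 * ((-(a+x)-s)/2) = b + a*x + x^2 := by linarith
  rw [mul_assoc, this, hc]; ring

theorem cubic_two_roots_in_Icc_of_one_lt_c (a b c : ℝ) (hc : c > 1)
    (hD : -27*c^2 + (18*a*b - 4*a^3)*c + a^2*b^2 - 4*b^3 ≥ 0) :
    Multiset.card (((X^3 + C a * X^2 + C b * X + C c : ℝ[X]).roots).filter
        (fun x => x ∈ Set.Icc (-1 : ℝ) 1)) = 2 ↔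
      ((a+b+c+1 ≤ 0 ∧ a-b+c-1 ≤ 0) ∨
       (a+b+c+1 ≥ 0 ∧ a-b+c-1 ≥ 0 ∧ (a - c)*c - b + 1 ≥ 0)) := by
  obtain ⟨x, y, z, rfl, rfl, rfl⟩ := exists_three a b c hD
  have h : x*y*z < -1 := by linarith
  have hp : (X^3 + C (-(x+y+z)) * X^2 + C (x*y+y*z+z*x) * X + C (-(x*y*z)) : ℝ[X])
      = (({x, y, z} : Multiset ℝ).map (fun t => X - C t)).prod := by
    simp only [Multiset.insert_eq_cons, Multiset.map_cons, Multiset.map_singleton,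
      Multiset.prod_cons, Multiset.prod_singleton, map_neg, map_add, map_mul]
    ring
  rw [hp, roots_multiset_prod_X_sub_C]
  have hC : Cond x y z ↔ ((-(x+y+z)+(x*y+y*z+z*x)+(-(x*y*z))+1 ≤ 0 ∧ -(x+y+z)-(x*y+y*z+z*x)+(-(x*y*z))-1 ≤ 0) ∨
       (-(x+y+z)+(x*y+y*z+z*x)+(-(x*y*z))+1 ≥ 0 ∧ -(x+y+z)-(x*y+y*z+z*x)+(-(x*y*z))-1 ≥ 0 ∧ (-(x+y+z) - (-(x*y*z)))*(-(x*y*z)) - (x*y+y*z+z*x) + 1 ≥ 0)) := by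
    unfold Cond
    rw [show (1-x)*(1-y)*(1-z) = -(x+y+z)+(x*y+y*z+z*x)+(-(x*y*z))+1 by ring,
      show -((1+x)*(1+y)*(1+z)) = -(x+y+z)-(x*y+y*z+z*x)+(-(x*y*z))-1 by ring,
      show (1-x*y)*(1-y*z)*(1-z*x) = (-(x+y+z) - (-(x*y*z)))*(-(x*y*z)) - (x*y+y*z+z*x) + 1 by ring]
  rw [← hC, ← two_iff x y z h]
  have h3 := not_three x y z h
  have e : ∀ t, t ∈ Set.Icc (-1:ℝ) 1 ↔ In1 t := fun t => Iff.rfl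
  unfold Two
  simp only [e, Multiset.insert_eq_cons, Multiset.filter_cons, Multiset.filter_singleton]
  by_cases hx : In1 x <;> by_cases hy : In1 y <;> by_cases hz : In1 z <;> simp_all
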